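/- Let k → A → H → B → k be an exact sequence of cosemisimple Hopf algebras. The map from Ĥ to finite subsets of B̂ sending a simple H-comodule V to const(V), the set of its simple B-constituents, has as its range exactly the equivalence classes of ∼_B, and its fibers are exactly the equivalence classes of ∼_H. -/

import Mathlib

/- Common infrastructure: right comodules over coalgebras, simplicity,
cosemisimplicity, subcoalgebras, adjoint coactions, normality, etc. -/

open TensorProduct

universe u

namespace QG

variable (k : Type u) [Field k]

section Coalg

variable (C : Type u) [AddCommGroup C] [Module k C] [Coalgebra k C]

/-- `ρ : V →ₗ[k] V ⊗[k] C` is a (coassociative, counital) right coaction. -/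
structure IsComod {V : Type u} [AddCommGroup V] [Module k V]
    (ρ : V →ₗ[k] V ⊗[k] C) : Prop where
  coassoc : ∀ v : V, ρ.rTensor C (ρ v) =
    (TensorProduct.assoc k V C C).symm.toLinearMap
      ((Coalgebra.comul (R := k) (A := C)).lTensor V (ρ v))
  counit : ∀ v : V, (TensorProduct.rid k V)
      ((Coalgebra.counit (R := k) (A := C)).lTensor V (ρ v)) = v

/-- A submodule `U ≤ V` is a subcomodule if the coaction restricts to it,
i.e. maps `U` into the image of `U ⊗ C` in `V ⊗ C`. -/
def IsSubcomod {V : Type u} [AddCommGroup V] [Module k V]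
    (ρ : V →ₗ[k] V ⊗[k] C) (U : Submodule k V) : Prop :=
  ∀ u ∈ U, ρ u ∈ LinearMap.range ((U.subtype).rTensor C)

/-- A simple subcomodule: a nonzero subcomodule with no nonzero proper
subcomodules below it. -/
def IsSimpleSubcomod {V : Type u} [AddCommGroup V] [Module k V]
    (ρ : V →ₗ[k] V ⊗[k] C) (U : Submodule k V) : Prop :=
  IsSubcomod k C ρ U ∧ U ≠ ⊥ ∧
    ∀ U' : Submodule k V, U' ≤ U → IsSubcomod k C ρ U' → U' = ⊥ ∨ U' = U

/-- A comodule is simple if it is simple as a subcomodule of itself. -/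
def IsSimpleComod {V : Type u} [AddCommGroup V] [Module k V]
    (ρ : V →ₗ[k] V ⊗[k] C) : Prop :=
  IsSimpleSubcomod k C ρ ⊤

/-- Morphisms of right `C`-comodules. -/
def IsComodHom {V W : Type u} [AddCommGroup V] [Module k V]
    [AddCommGroup W] [Module k W]
    (ρV : V →ₗ[k] V ⊗[k] C) (ρW : W →ₗ[k] W ⊗[k] C) (f : V →ₗ[k] W) : Prop :=
  ρW ∘ₗ f = (f.rTensor C) ∘ₗ ρV

/-- `C` is cosemisimple: every right `C`-comodule is an (internal) direct sum
of simple subcomodules. -/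
def IsCosemisimple : Prop :=
  ∀ (V : Type u) [AddCommGroup V] [Module k V]
    (ρ : V →ₗ[k] V ⊗[k] C), IsComod k C ρ →
    ∃ (ι : Type u) (U : ι → Submodule k V),
      (∀ i, IsSimpleSubcomod k C ρ (U i)) ∧
      iSupIndep U ∧ (⨆ i, U i) = ⊤

/-- Subcoalgebras of `C`, as submodules. -/
def IsSubcoalgebra (D : Submodule k C) : Prop :=
  ∀ x ∈ D, Coalgebra.comul (R := k) x ∈
    LinearMap.range (TensorProduct.map D.subtype D.subtype)

/-- Simple subcoalgebras: nonzero ones with no nonzero proper subcoalgebras. -/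
def IsSimpleSubcoalgebra (D : Submodule k C) : Prop :=
  IsSubcoalgebra k C D ∧ D ≠ ⊥ ∧
    ∀ D' : Submodule k C, D' ≤ D → IsSubcoalgebra k C D' → D' = ⊥ ∨ D' = D

/-- The coefficient space of a comodule: the smallest submodule `D ≤ C` such
that the coaction factors through `V ⊗ D`.  For a simple comodule this is its
coefficient coalgebra. -/
def coeffSpace {V : Type u} [AddCommGroup V] [Module k V]
    (ρ : V →ₗ[k] V ⊗[k] C) : Submodule k C :=
  sInf {D : Submodule k C | ∀ v : V, ρ v ∈ LinearMap.range ((D.subtype).lTensor V)}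

/-- Corestriction of a coaction along a linear map of coalgebras `π : C → D`. -/
noncomputable def cores {D : Type u} [AddCommGroup D] [Module k D]
    {V : Type u} [AddCommGroup V] [Module k V]
    (π : C →ₗ[k] D) (ρ : V →ₗ[k] V ⊗[k] C) : V →ₗ[k] V ⊗[k] D :=
  (π.lTensor V) ∘ₗ ρ

end Coalg

section Bialg

variable (H : Type u) [Ring H] [Bialgebra k H]

/-- An invariant vector for a coaction of a bialgebra. -/
def IsInvariant {V : Type u} [AddCommGroup V] [Module k V]
    (ρ : V →ₗ[k] V ⊗[k] H) (v : V) : Prop :=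
  ρ v = v ⊗ₜ[k] (1 : H)

/-- The tensor product coaction on `V ⊗ W` for a bialgebra `H`:
`v ⊗ w ↦ (v₀ ⊗ w₀) ⊗ v₁w₁`. -/
noncomputable def tensorCoact {V W : Type u}
    [AddCommGroup V] [Module k V] [AddCommGroup W] [Module k W]
    (ρV : V →ₗ[k] V ⊗[k] H) (ρW : W →ₗ[k] W ⊗[k] H) :
    (V ⊗[k] W) →ₗ[k] (V ⊗[k] W) ⊗[k] H :=
  ((LinearMap.mul' k H).lTensor (V ⊗[k] W)) ∘ₗ
    (TensorProduct.tensorTensorTensorComm k V H W H).toLinearMap ∘ₗ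
    (TensorProduct.map ρV ρW)

/-- `O(G/H)`: the right coinvariants `{x | (id ⊗ π)Δ(x) = x ⊗ 1}` of a
quotient map `π`. -/
noncomputable def quotientSpaceLeft {B : Type u} [AddCommGroup B] [Module k B] [One B]
    (π : H →ₗ[k] B) : Submodule k H :=
  LinearMap.ker ((π.lTensor H) ∘ₗ (Coalgebra.comul (R := k) (A := H)) -
    (TensorProduct.mk k H B).flip 1)

/-- `O(H\G)`: the left coinvariants `{x | (π ⊗ id)Δ(x) = 1 ⊗ x}`. -/
noncomputable def quotientSpaceRight {B : Type u} [AddCommGroup B] [Module k B] [One B]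
    (π : H →ₗ[k] B) : Submodule k H :=
  LinearMap.ker ((π.rTensor H) ∘ₗ (Coalgebra.comul (R := k) (A := H)) -
    (TensorProduct.mk k B H) 1)

end Bialg

section Hopf

variable (H : Type u) [Ring H] [HopfAlgebra k H]

/-- Iterated comultiplication `x ↦ x₁ ⊗ (x₂ ⊗ x₃)`. -/
noncomputable def comul2 : H →ₗ[k] H ⊗[k] (H ⊗[k] H) :=
  ((Coalgebra.comul (R := k) (A := H)).lTensor H) ∘ₗ (Coalgebra.comul (R := k) (A := H))

/-- The right adjoint coaction `x ↦ x₂ ⊗ S(x₁)x₃`. -/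
noncomputable def adR : H →ₗ[k] H ⊗[k] H :=
  ((LinearMap.mul' k H).lTensor H) ∘ₗ
    (TensorProduct.assoc k H H H).toLinearMap ∘ₗ
    (((TensorProduct.comm k H H).toLinearMap).rTensor H) ∘ₗ
    (TensorProduct.assoc k H H H).symm.toLinearMap ∘ₗ
    ((HopfAlgebra.antipode (R := k) (A := H)).rTensor (H ⊗[k] H)) ∘ₗ
    comul2 k H

/-- The left adjoint coaction `x ↦ x₁S(x₃) ⊗ x₂` (a left coaction, with the
coacting tensorand on the left). -/
noncomputable def adL : H →ₗ[k] H ⊗[k] H :=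
  ((LinearMap.mul' k H).rTensor H) ∘ₗ
    (TensorProduct.assoc k H H H).symm.toLinearMap ∘ₗ
    (((TensorProduct.comm k H H).toLinearMap).lTensor H) ∘ₗ
    (((HopfAlgebra.antipode (R := k) (A := H)).lTensor H).lTensor H) ∘ₗ
    comul2 k H

variable {B : Type u} [AddCommGroup B] [Module k B]

/-- `π : O(G) → O(H)` is right-normal: it is a morphism of right
`O(G)`-comodules for the right adjoint coaction, i.e. the right adjoint
coaction descends along `π`. -/
def IsRightNormal (π : H →ₗ[k] B) : Prop :=
  ∃ ρ : B →ₗ[k] B ⊗[k] H, ρ ∘ₗ π = (π.rTensor H) ∘ₗ adR k H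

/-- `π : O(G) → O(H)` is left-normal: the left adjoint coaction descends
along `π`. -/
def IsLeftNormal (π : H →ₗ[k] B) : Prop :=
  ∃ lam : B →ₗ[k] H ⊗[k] B, lam ∘ₗ π = (π.lTensor H) ∘ₗ adL k H

end Hopf

end QG

namespace QG

variable (k : Type u) [Field k]

section Coalg2

variable (C : Type u) [AddCommGroup C] [Module k C] [Coalgebra k C]

/-- A bundled simple right `C`-comodule. -/
structure SimpleComodule where
  V : Type u
  [addCommGroup : AddCommGroup V]
  [module : Module k V]
  ρ : V →ₗ[k] V ⊗[k] C
  isComod : IsComod k C ρ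
  isSimple : IsSimpleComod k C ρ

attribute [instance] SimpleComodule.addCommGroup SimpleComodule.module

/-- A simple comodule `(T, ρT)` is a constituent of a comodule `(V, ρV)`
(over a cosemisimple coalgebra) iff there is a nonzero comodule map `T → V`. -/
def IsConstituent {T V : Type u} [AddCommGroup T] [Module k T]
    [AddCommGroup V] [Module k V]
    (ρT : T →ₗ[k] T ⊗[k] C) (ρV : V →ₗ[k] V ⊗[k] C) : Prop :=
  ∃ f : T →ₗ[k] V, f ≠ 0 ∧ IsComodHom k C ρT ρV f

/-- Isomorphism of (simple) comodules. -/
def comodIsoRel (X Y : SimpleComodule k C) : Prop :=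
  ∃ e : X.V ≃ₗ[k] Y.V, IsComodHom k C X.ρ Y.ρ e.toLinearMap

/-- The set `Ĉ` of isomorphism classes of simple right `C`-comodules. -/
def SimpleComodQuot := Quot (comodIsoRel k C)

/-- The isomorphism class of a simple comodule. -/
def SimpleComodule.cls (X : SimpleComodule k C) : SimpleComodQuot k C :=
  Quot.mk _ X

/-- Group-like elements of a coalgebra; these correspond to the
one-dimensional comodules, i.e. to characters. -/
def IsGroupLike (a : C) : Prop :=
  Coalgebra.counit (R := k) (A := C) a = (1 : k) ∧
    Coalgebra.comul (R := k) (A := C) a = a ⊗ₜ[k] a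

/-- A linear map `φ : C → Z` out of a coalgebra is central if
`φ(x₁) ⊗ x₂ = φ(x₂) ⊗ x₁`. -/
def IsCentralMap {Z : Type u} [AddCommGroup Z] [Module k Z] (φ : C →ₗ[k] Z) : Prop :=
  (φ.rTensor C) ∘ₗ (Coalgebra.comul (R := k) (A := C)) =
    (φ.rTensor C) ∘ₗ (TensorProduct.comm k C C).toLinearMap ∘ₗ
      (Coalgebra.comul (R := k) (A := C))

/-- The simple comodule `X` has "central character" `g` with respect to the
quotient map `γ : C → Z`: corestricted along `γ`, the coaction on `X` is a sum
of copies of the character `g`. -/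
def HasCentralChar {Z : Type u} [AddCommGroup Z] [Module k Z]
    (γ : C →ₗ[k] Z) (X : SimpleComodule k C) (g : Z) : Prop :=
  ∀ v : X.V, cores k C γ X.ρ v = v ⊗ₜ[k] g

end Coalg2

/-- The k-span of the set of products `g * a`, `a ∈ Am`; for `Am` a submodule
this is the left ideal generated by `Am`. -/
def leftIdealGen {G : Type u} [Ring G] [Module k G] (Am : Submodule k G) :
    Submodule k G :=
  Submodule.span k {x : G | ∃ g : G, ∃ a ∈ Am, x = g * a}

end QG

namespace QG

variable (k : Type u) [Field k]
variable {H B : Type u} [Ring H] [HopfAlgebra k H] [Ring B] [HopfAlgebra k B]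

/-- `const(U) ⊆ B̂`: the set of isomorphism classes of simple `B`-comodule
constituents of the corestriction of the simple `H`-comodule `U` along `π`. -/
noncomputable def constHat (π : H →ₐc[k] B) (U : SimpleComodule k H) :
    Set (SimpleComodQuot k B) :=
  {x | ∃ X : SimpleComodule k B, X.cls = x ∧
    IsConstituent k B X.ρ (cores k H (π : H →ₗ[k] B) U.ρ)}

/-- The relation `∼_B` on `B̂`: two simple `B`-comodules are related iff they
are both constituents of (the corestriction of) one and the same simple
`H`-comodule. -/
noncomputable def relSimB (π : H →ₐc[k] B) :
    SimpleComodQuot k B → SimpleComodQuot k B → Prop :=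
  fun x y => ∃ U : SimpleComodule k H, x ∈ constHat k π U ∧ y ∈ constHat k π U

/-- The relation `∼_H` on `Ĥ`: nonzero `B`-comodule morphisms exist between
corestrictions, i.e. the corestrictions share a simple constituent. -/
noncomputable def relSimH (π : H →ₐc[k] B) :
    SimpleComodQuot k H → SimpleComodQuot k H → Prop :=
  fun x y => ∃ X Y : SimpleComodule k H, X.cls = x ∧ Y.cls = y ∧
    ∃ f : X.V →ₗ[k] Y.V, f ≠ 0 ∧
      IsComodHom k B (cores k H (π : H →ₗ[k] B) X.ρ)
        (cores k H (π : H →ₗ[k] B) Y.ρ) f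

/-- The map `Ĥ → {finite subsets of B̂}` sending a simple `H`-comodule to its
set of simple `B`-constituents. -/
noncomputable def constMap (π : H →ₐc[k] B) :
    SimpleComodQuot k H → Set (SimpleComodQuot k B) :=
  fun x => {y | ∃ U : SimpleComodule k H, U.cls = x ∧ y ∈ constHat k π U}

end QG

/-! For comodules `V`, `W` over `H` and a `B`-colinear map `f : V → W`, the elements
`f(v₀)₀ ⊗ f(v₀)₁ S(v₁)` of `W ⊗ H` have coinvariant second legs. Exactness makes these second legs
coinvariant on the left as well, so slicing by functionals on `H` gives `B`-colinear maps `V → W`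
again. Hence the sum of the images of all `B`-colinear maps `V → W` is an `H`-subcomodule of `W`.
If `W` is simple and `f ≠ 0` it is all of `W`, so every simple `B`-constituent of `W` receives a
nonzero map from `V`. By semisimplicity of `B`-comodules the situation is symmetric in `V` and `W`,
so two simple `H`-comodules sharing one `B`-constituent share all of them. -/

namespace QG

open Coalgebra LinearMap WithConv

section Slice

variable {k V W C D : Type*} [Field k] [AddCommGroup V] [Module k V] [AddCommGroup W] [Module k W]
  [AddCommGroup C] [Module k C] [AddCommGroup D] [Module k D]

/-- The slice map `id ⊗ φ : V ⊗ C → V` of a functional `φ` on `C`. -/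
noncomputable def slice (φ : C →ₗ[k] k) : V ⊗[k] C →ₗ[k] V :=
  (TensorProduct.rid k V).toLinearMap ∘ₗ φ.lTensor V

@[simp]
lemma slice_tmul (φ : C →ₗ[k] k) (v : V) (c : C) : slice φ (v ⊗ₜ[k] c) = φ c • v := by
  simp only [slice, coe_comp, LinearEquiv.coe_coe, Function.comp_apply, lTensor_tmul,
    TensorProduct.rid_tmul]

lemma slice_rTensor (φ : C →ₗ[k] k) (f : V →ₗ[k] W) (t : V ⊗[k] C) :
    slice φ (f.rTensor C t) = f (slice φ t) := by
  have h : slice φ ∘ₗ f.rTensor C = f ∘ₗ slice φ := TensorProduct.ext' fun v c ↦ by simp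
  exact LinearMap.congr_fun h t

lemma slice_lTensor (φ : D →ₗ[k] k) (g : C →ₗ[k] D) (t : V ⊗[k] C) :
    slice φ (g.lTensor V t) = slice (φ ∘ₗ g) t := by
  have h : slice φ ∘ₗ g.lTensor V = slice (V := V) (φ ∘ₗ g) :=
    TensorProduct.ext' fun v c ↦ by simp
  exact LinearMap.congr_fun h t

lemma slice_slice_assoc_symm (φ : C →ₗ[k] k) (ψ : D →ₗ[k] k) (t : V ⊗[k] (C ⊗[k] D)) :
    slice φ (slice ψ ((TensorProduct.assoc k V C D).symm t)) =
      slice (LinearMap.mul' k k ∘ₗ TensorProduct.map φ ψ) t := by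
  have h : slice φ ∘ₗ slice ψ ∘ₗ (TensorProduct.assoc k V C D).symm.toLinearMap =
      slice (LinearMap.mul' k k ∘ₗ TensorProduct.map φ ψ) :=
    TensorProduct.ext_threefold' fun v c d ↦ by simp [mul_smul, smul_comm (ψ d)]
  exact LinearMap.congr_fun h t

lemma ext_slice {t t' : V ⊗[k] C} (h : ∀ φ : C →ₗ[k] k, slice φ t = slice φ t') : t = t' := by
  classical
  let b := Module.Basis.ofVectorSpace k C
  have coord (i) (t : V ⊗[k] C) :
      TensorProduct.equivFinsuppOfBasisRight b t i = slice (b.coord i) t := by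
    have h : Finsupp.lapply i ∘ₗ (TensorProduct.equivFinsuppOfBasisRight b).toLinearMap =
        slice (V := V) (b.coord i) := TensorProduct.ext' fun v c ↦ by simp
    exact LinearMap.congr_fun h t
  exact (TensorProduct.equivFinsuppOfBasisRight b).injective <| Finsupp.ext fun i ↦ by
    rw [coord, coord, h]

lemma mem_range_rTensor_subtype_iff {U : Submodule k V} {t : V ⊗[k] C} :
    t ∈ LinearMap.range (U.subtype.rTensor C) ↔ ∀ φ : C →ₗ[k] k, slice φ t ∈ U := by
  constructor
  · rintro ⟨s, rfl⟩ φ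
    exact slice_rTensor φ U.subtype s ▸ (slice φ s).2
  · intro h
    refine (rTensor_exact C (exact_subtype_mkQ U) U.mkQ_surjective t).1 (ext_slice fun φ ↦ ?_)
    rw [slice_rTensor, map_zero]
    exact (Submodule.Quotient.mk_eq_zero U).2 (h φ)

end Slice

section Act

variable {k V W C D : Type u} [Field k] [AddCommGroup V] [Module k V] [AddCommGroup W] [Module k W]
  [AddCommGroup C] [Module k C] [AddCommGroup D] [Module k D]

/-- The action `v ↦ v₀ φ(v₁)` of a functional `φ` on the coefficients through a coaction. -/
noncomputable def act (ρ : V →ₗ[k] V ⊗[k] C) (φ : C →ₗ[k] k) : V →ₗ[k] V :=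
  slice φ ∘ₗ ρ

lemma act_apply (ρ : V →ₗ[k] V ⊗[k] C) (φ : C →ₗ[k] k) (v : V) : act ρ φ v = slice φ (ρ v) :=
  rfl

variable {ρ : V →ₗ[k] V ⊗[k] C} {σ : W →ₗ[k] W ⊗[k] C}

lemma isSubcomod_iff_act {U : Submodule k V} :
    IsSubcomod k C ρ U ↔ ∀ u ∈ U, ∀ φ : C →ₗ[k] k, act ρ φ u ∈ U :=
  forall₂_congr fun _ _ ↦ mem_range_rTensor_subtype_iff

lemma isComodHom_iff_act {f : V →ₗ[k] W} :
    IsComodHom k C ρ σ f ↔ ∀ (φ : C →ₗ[k] k) (v : V), act σ φ (f v) = f (act ρ φ v) := by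
  refine ⟨fun h φ v ↦ ?_, fun h ↦ LinearMap.ext fun v ↦ ext_slice fun φ ↦ ?_⟩
  · rw [act_apply, act_apply, ← slice_rTensor]
    exact congrArg (slice φ) (LinearMap.congr_fun h v)
  · exact (h φ v).trans (slice_rTensor φ f (ρ v)).symm

lemma act_cores (π : C →ₗ[k] D) (ρ : V →ₗ[k] V ⊗[k] C) (φ : D →ₗ[k] k) :
    act (cores k C π ρ) φ = act ρ (φ ∘ₗ π) :=
  LinearMap.ext fun v ↦ slice_lTensor φ π (ρ v)

lemma IsComodHom.cores {f : V →ₗ[k] W} (hf : IsComodHom k C ρ σ f) (π : C →ₗ[k] D) :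
    IsComodHom k D (cores k C π ρ) (cores k C π σ) f :=
  isComodHom_iff_act.2 fun φ v ↦ by
    rw [act_cores, act_cores, isComodHom_iff_act.1 hf]

lemma IsComodHom.comp {X : Type u} [AddCommGroup X] [Module k X] {τ : X →ₗ[k] X ⊗[k] C}
    {g : W →ₗ[k] X} {f : V →ₗ[k] W} (hg : IsComodHom k C σ τ g) (hf : IsComodHom k C ρ σ f) :
    IsComodHom k C ρ τ (g ∘ₗ f) :=
  isComodHom_iff_act.2 fun φ v ↦ by
    rw [comp_apply, isComodHom_iff_act.1 hg, isComodHom_iff_act.1 hf, comp_apply]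

lemma IsComodHom.symm {e : V ≃ₗ[k] W} (he : IsComodHom k C ρ σ e.toLinearMap) :
    IsComodHom k C σ ρ e.symm.toLinearMap :=
  isComodHom_iff_act.2 fun φ w ↦ e.injective <| by
    simpa using (isComodHom_iff_act.1 he φ (e.symm w)).symm

variable [Coalgebra k C] [Coalgebra k D]

lemma isComod_iff_act :
    IsComod k C ρ ↔
      (∀ (φ ψ : C →ₗ[k] k) (v : V),
        act ρ φ (act ρ ψ v) = act ρ (toConv φ * toConv ψ).ofConv v) ∧
      ∀ v : V, act ρ counit v = v := by
  have act_act (φ ψ : C →ₗ[k] k) (v : V) :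
      act ρ φ (act ρ ψ v) = slice φ (slice ψ (ρ.rTensor C (ρ v))) := by
    rw [slice_rTensor, act_apply, act_apply]
  have act_mul (φ ψ : C →ₗ[k] k) (v : V) : act ρ (toConv φ * toConv ψ).ofConv v =
      slice φ (slice ψ ((TensorProduct.assoc k V C C).symm (comul.lTensor V (ρ v)))) := by
    rw [slice_slice_assoc_symm, slice_lTensor]
    rfl
  refine ⟨fun h ↦ ⟨fun φ ψ v ↦ ?_, h.counit⟩, fun h ↦ ⟨fun v ↦ ?_, h.2⟩⟩
  · rw [act_act, act_mul, h.coassoc]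
    rfl
  · refine ext_slice fun ψ ↦ ext_slice fun φ ↦ ?_
    exact (act_act φ ψ v).symm.trans ((h.1 φ ψ v).trans (act_mul φ ψ v))

lemma IsComod.cores {F : Type*} [FunLike F C D] [CoalgHomClass F k C D] (hρ : IsComod k C ρ)
    (π : F) : IsComod k D (cores k C (π : C →ₗ[k] D) ρ) := by
  obtain ⟨act_act, act_counit⟩ := isComod_iff_act.1 hρ
  have mul_comp (φ ψ : D →ₗ[k] k) : (toConv φ * toConv ψ).ofConv ∘ₗ (π : C →ₗ[k] D) =
      (toConv (φ ∘ₗ (π : C →ₗ[k] D)) * toConv (ψ ∘ₗ (π : C →ₗ[k] D))).ofConv :=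
    convMul_comp_coalgHom_distrib (toConv φ) (toConv ψ) (CoalgHomClass.toCoalgHom π)
  refine isComod_iff_act.2 ⟨fun φ ψ v ↦ ?_, fun v ↦ ?_⟩
  · rw [act_cores, act_cores, act_cores, act_act, mul_comp]
  · rw [act_cores, CoalgHomClass.counit_comp, act_counit]

end Act

lemma exists_linearMap_comp_comp_eq {R M N : Type*} [Ring R] [AddCommGroup M] [Module R M]
    [AddCommGroup N] [Module R N] [IsSemisimpleModule R M] [IsSemisimpleModule R N]
    (f : M →ₗ[R] N) : ∃ g : N →ₗ[R] M, f ∘ₗ g ∘ₗ f = f := by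
  obtain ⟨s, hs⟩ :=
    IsSemisimpleModule.lifting_property f.rangeRestrict f.surjective_rangeRestrict .id
  obtain ⟨g, hg⟩ := IsSemisimpleModule.extension_property f.range.subtype
    f.range.injective_subtype s
  refine ⟨g, LinearMap.ext fun v ↦ ?_⟩
  calc f (g (f v)) = f (s ⟨f v, v, rfl⟩) := congrArg f (LinearMap.congr_fun hg ⟨f v, v, rfl⟩)
    _ = f v := congrArg Subtype.val (LinearMap.congr_fun hs ⟨f v, v, rfl⟩)

section DualModule

variable {k V W C : Type u} [Field k] [AddCommGroup V] [Module k V] [AddCommGroup W] [Module k W]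
  [AddCommGroup C] [Module k C] [Coalgebra k C] {ρ : V →ₗ[k] V ⊗[k] C} {σ : W →ₗ[k] W ⊗[k] C}

/-- The action of the convolution algebra `C*` on a `C`-comodule. -/
noncomputable def IsComod.dualAction (hρ : IsComod k C ρ) :
    WithConv (C →ₗ[k] k) →ₐ[k] Module.End k V :=
  AlgHom.ofLinearMap
    { toFun φ := act ρ φ.ofConv
      map_add' φ ψ := by simp only [act, slice, ofConv_add, lTensor_add, comp_add, add_comp]
      map_smul' a φ := by
        simp only [act, slice, ofConv_smul, lTensor_smul, comp_smul, smul_comp, RingHom.id_apply] }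
    (LinearMap.ext (isComod_iff_act.1 hρ).2)
    fun φ ψ ↦ LinearMap.ext fun v ↦ ((isComod_iff_act.1 hρ).1 φ.ofConv ψ.ofConv v).symm

/-- The space of a comodule over `C`, regarded as a module over the convolution algebra `C*`; this
gives access to the library's theory of simple and semisimple modules. -/
@[nolint unusedArguments]
def DualModule (_ : IsComod k C ρ) : Type u := V

namespace DualModule

variable (hρ : IsComod k C ρ)

instance : AddCommGroup (DualModule hρ) :=
  inferInstanceAs (AddCommGroup V)

instance : Module k (DualModule hρ) :=
  inferInstanceAs (Module k V)

noncomputable instance : Module (WithConv (C →ₗ[k] k)) (DualModule hρ) :=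
  Module.compHom V (hρ.dualAction : WithConv (C →ₗ[k] k) →+* Module.End k V)

instance : IsScalarTower k (WithConv (C →ₗ[k] k)) (DualModule hρ) where
  smul_assoc a φ v := LinearMap.congr_fun (map_smul hρ.dualAction a φ) v

end DualModule

/-- A morphism of comodules as a `C*`-linear map. -/
noncomputable def IsComodHom.toDualModule {f : V →ₗ[k] W} (hf : IsComodHom k C ρ σ f)
    (hρ : IsComod k C ρ) (hσ : IsComod k C σ) :
    DualModule hρ →ₗ[WithConv (C →ₗ[k] k)] DualModule hσ :=
  { toFun := f
    map_add' := map_add f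
    map_smul' := fun φ v ↦ (isComodHom_iff_act.1 hf φ.ofConv v).symm }

lemma isComodHom_restrictScalars {hρ : IsComod k C ρ} {hσ : IsComod k C σ}
    (f : DualModule hρ →ₗ[WithConv (C →ₗ[k] k)] DualModule hσ) :
    IsComodHom k C ρ σ (f.restrictScalars k : DualModule hρ →ₗ[k] DualModule hσ) :=
  isComodHom_iff_act.2 fun φ v ↦ (f.map_smul (toConv φ) v).symm

/-- A subcomodule as a `C*`-submodule. -/
noncomputable def IsSubcomod.toDualModule {U : Submodule k V} (hU : IsSubcomod k C ρ U)
    (hρ : IsComod k C ρ) : Submodule (WithConv (C →ₗ[k] k)) (DualModule hρ) :=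
  { U with smul_mem' := fun φ v hv ↦ isSubcomod_iff_act.1 hU v hv φ.ofConv }

lemma isSubcomod_restrictScalars {hρ : IsComod k C ρ}
    (N : Submodule (WithConv (C →ₗ[k] k)) (DualModule hρ)) :
    IsSubcomod k C ρ (N.restrictScalars k) :=
  isSubcomod_iff_act.2 fun _ hv φ ↦ N.smul_mem (toConv φ) hv

lemma IsSimpleSubcomod.isAtom {U : Submodule k V} (hU : IsSimpleSubcomod k C ρ U)
    (hρ : IsComod k C ρ) : IsAtom (hU.1.toDualModule hρ) := by
  have restrictScalars_eq : (hU.1.toDualModule hρ).restrictScalars k = U := rfl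
  refine ⟨fun h ↦ hU.2.1 ?_, fun N hN ↦ ?_⟩
  · rw [← restrictScalars_eq, h]
    exact Submodule.restrictScalars_bot k _ _
  · obtain h | h := hU.2.2 _ hN.le (isSubcomod_restrictScalars N)
    · exact (Submodule.restrictScalars_eq_bot_iff k _ _).1 h
    · exact absurd ((Submodule.restrictScalars_inj k _ _).1 (h.trans restrictScalars_eq.symm)) hN.ne

lemma IsSimpleComod.isSimpleModule (hs : IsSimpleComod k C ρ) (hρ : IsComod k C ρ) :
    IsSimpleModule (WithConv (C →ₗ[k] k)) (DualModule hρ) :=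
  (isSimpleModule_iff _ _).2 (isSimpleOrder_iff_isAtom_top.2 (hs.isAtom hρ))

lemma IsCosemisimple.isSemisimpleModule (hC : IsCosemisimple k C) (hρ : IsComod k C ρ) :
    IsSemisimpleModule (WithConv (C →ₗ[k] k)) (DualModule hρ) := by
  obtain ⟨ι, U, hU, -, hsup⟩ := hC V ρ hρ
  set S := sSup {N : Submodule (WithConv (C →ₗ[k] k)) (DualModule hρ) |
    IsSimpleModule (WithConv (C →ₗ[k] k)) N}
  have le_S (i : ι) : (hU i).1.toDualModule hρ ≤ S :=
    le_sSup (isSimpleModule_iff_isAtom.2 ((hU i).isAtom hρ))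
  have iSup_le_S : ⨆ i, U i ≤ S.restrictScalars k := iSup_le fun i _ hv ↦ le_S i hv
  exact .of_sSup_simples_eq_top (eq_top_iff.2 fun v _ ↦ iSup_le_S (hsup ▸ Submodule.mem_top))

lemma IsComodHom.injective {f : V →ₗ[k] W} (hf : IsComodHom k C ρ σ f) (hρ : IsComod k C ρ)
    (hσ : IsComod k C σ) (hs : IsSimpleComod k C ρ) (hf₀ : f ≠ 0) : Function.Injective f := by
  have := hs.isSimpleModule hρ
  exact LinearMap.injective_of_ne_zero (f := hf.toDualModule hρ hσ)
    fun h ↦ hf₀ (LinearMap.ext fun v ↦ LinearMap.congr_fun h v)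

lemma IsComodHom.bijective {f : V →ₗ[k] W} (hf : IsComodHom k C ρ σ f) (hρ : IsComod k C ρ)
    (hσ : IsComod k C σ) (hs : IsSimpleComod k C ρ) (hs' : IsSimpleComod k C σ) (hf₀ : f ≠ 0) :
    Function.Bijective f := by
  have := hs.isSimpleModule hρ
  have := hs'.isSimpleModule hσ
  exact LinearMap.bijective_of_ne_zero (f := hf.toDualModule hρ hσ)
    fun h ↦ hf₀ (LinearMap.ext fun v ↦ LinearMap.congr_fun h v)

lemma IsConstituent.symm (hC : IsCosemisimple k C) (hρ : IsComod k C ρ) (hσ : IsComod k C σ)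
    (h : IsConstituent k C ρ σ) : IsConstituent k C σ ρ := by
  obtain ⟨f, hf₀, hf⟩ := h
  have := hC.isSemisimpleModule hρ
  have := hC.isSemisimpleModule hσ
  obtain ⟨g, hg⟩ := exists_linearMap_comp_comp_eq (hf.toDualModule hρ hσ)
  refine ⟨g.restrictScalars k, fun h ↦ hf₀ (LinearMap.ext fun v ↦ ?_),
    isComodHom_restrictScalars g⟩
  calc f v = f (g (f v)) := (LinearMap.congr_fun hg v).symm
    _ = f 0 := congrArg f (LinearMap.congr_fun h (f v))
    _ = 0 := map_zero f

lemma IsSimpleComod.finiteDimensional (hs : IsSimpleComod k C ρ) (hρ : IsComod k C ρ) :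
    FiniteDimensional k V := by
  have := hs.isSimpleModule hρ
  have := IsSimpleModule.nontrivial (WithConv (C →ₗ[k] k)) (DualModule hρ)
  obtain ⟨v, hv⟩ := exists_ne (0 : DualModule hρ)
  obtain ⟨N, hN, hvN⟩ := TensorProduct.exists_finite_submodule_left_of_setFinite {ρ v}
    (Set.finite_singleton _)
  have hmem := mem_range_rTensor_subtype_iff.1 (hvN rfl)
  have htop : N = ⊤ := eq_top_iff.2 fun w _ ↦ by
    obtain ⟨φ, rfl⟩ := IsSimpleModule.toSpanSingleton_surjective (WithConv (C →ₗ[k] k)) hv w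
    exact hmem φ.ofConv
  exact Module.finite_def.2 (htop ▸ Module.Finite.iff_fg.1 hN)

end DualModule

section Restrict

variable {k V W C : Type u} [Field k] [AddCommGroup V] [Module k V] [AddCommGroup W] [Module k W]
  [AddCommGroup C] [Module k C] {ρ : V →ₗ[k] V ⊗[k] C} {U : Submodule k V}

/-- The coaction induced on a subcomodule. -/
noncomputable def IsSubcomod.restrict (hU : IsSubcomod k C ρ U) : U →ₗ[k] U ⊗[k] C :=
  (LinearEquiv.ofInjective (U.subtype.rTensor C)
    (Module.Flat.rTensor_preserves_injective_linearMap _ U.injective_subtype)).symm.toLinearMap ∘ₗ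
    (ρ ∘ₗ U.subtype).codRestrict _ fun u ↦ hU u u.2

lemma IsSubcomod.isComodHom_subtype (hU : IsSubcomod k C ρ U) :
    IsComodHom k C hU.restrict ρ U.subtype :=
  LinearMap.ext fun u ↦ (congrArg Subtype.val (LinearEquiv.apply_symm_apply
    (LinearEquiv.ofInjective (U.subtype.rTensor C)
      (Module.Flat.rTensor_preserves_injective_linearMap _ U.injective_subtype))
    ⟨ρ u, hU u u.2⟩)).symm

lemma IsSubcomod.coe_act_restrict (hU : IsSubcomod k C ρ U) (φ : C →ₗ[k] k) (u : U) :
    (act hU.restrict φ u : V) = act ρ φ u :=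
  (isComodHom_iff_act.1 hU.isComodHom_subtype φ u).symm

lemma IsSimpleSubcomod.isSimpleComod_restrict (hU : IsSimpleSubcomod k C ρ U) :
    IsSimpleComod k C hU.1.restrict := by
  refine ⟨isSubcomod_iff_act.2 fun _ _ _ ↦ trivial, ?_, fun N _ hN ↦ ?_⟩
  · have := (Submodule.nontrivial_iff_ne_bot).2 hU.2.1
    exact top_ne_bot
  · have hmap : IsSubcomod k C ρ (N.map U.subtype) := by
      refine isSubcomod_iff_act.2 ?_
      rintro _ ⟨n, hn, rfl⟩ φ
      exact ⟨act hU.1.restrict φ n, isSubcomod_iff_act.1 hN n hn φ, hU.1.coe_act_restrict φ n⟩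
    have inj := Submodule.map_injective_of_injective U.injective_subtype
    exact (hU.2.2 _ (Submodule.map_subtype_le U N) hmap).imp
      (fun h ↦ inj (h.trans (Submodule.map_bot _).symm))
      fun h ↦ inj (h.trans U.map_subtype_top.symm)

variable [Coalgebra k C]

lemma IsComod.restrict (hρ : IsComod k C ρ) (hU : IsSubcomod k C ρ U) :
    IsComod k C hU.restrict := by
  obtain ⟨act_act, act_counit⟩ := isComod_iff_act.1 hρ
  refine isComod_iff_act.2 ⟨fun φ ψ u ↦ Subtype.ext ?_, fun u ↦ Subtype.ext ?_⟩
  · simp only [hU.coe_act_restrict, act_act]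
  · rw [hU.coe_act_restrict, act_counit]

/-- A simple subcomodule as a bundled simple comodule. -/
noncomputable def IsSimpleSubcomod.toSimpleComodule (hU : IsSimpleSubcomod k C ρ U)
    (hρ : IsComod k C ρ) : SimpleComodule k C where
  V := U
  ρ := hU.1.restrict
  isComod := hρ.restrict hU.1
  isSimple := hU.isSimpleComod_restrict

lemma IsCosemisimple.exists_comp_ne_zero (hC : IsCosemisimple k C) (hρ : IsComod k C ρ)
    {f : V →ₗ[k] W} (hf : f ≠ 0) :
    ∃ (X : SimpleComodule k C) (i : X.V →ₗ[k] V), IsComodHom k C X.ρ ρ i ∧ f ∘ₗ i ≠ 0 := by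
  obtain ⟨ι, U, hU, -, hsup⟩ := hC V ρ hρ
  by_contra! h
  have le_ker (i : ι) : U i ≤ LinearMap.ker f := fun u hu ↦ LinearMap.congr_fun
    (h ((hU i).toSimpleComodule hρ) (U i).subtype (hU i).1.isComodHom_subtype) ⟨u, hu⟩
  exact hf (LinearMap.ker_eq_top.1 (eq_top_iff.2 (hsup ▸ iSup_le le_ker)))

end Restrict

lemma isotypicComponent_mem_isotypicComponents {R M S : Type*} [Ring R] [AddCommGroup M]
    [Module R M] [AddCommGroup S] [Module R S] [IsSimpleModule R S] {f : S →ₗ[R] M}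
    (hf : Function.Injective f) : isotypicComponent R M S ∈ isotypicComponents R M :=
  have e := LinearEquiv.ofInjective f hf
  ⟨f.range, .congr e.symm, e.isotypicComponent_eq⟩

lemma nonempty_linearEquiv_of_isotypicComponent_eq {R M S T : Type*} [Ring R] [AddCommGroup M]
    [Module R M] [AddCommGroup S] [Module R S] [IsSimpleModule R S] [AddCommGroup T] [Module R T]
    [IsSimpleModule R T] {f : S →ₗ[R] M} (hf : Function.Injective f)
    (h : isotypicComponent R M S = isotypicComponent R M T) : Nonempty (S ≃ₗ[R] T) := by
  have e := LinearEquiv.ofInjective f hf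
  have : IsSimpleModule R f.range := .congr e.symm
  have hle : f.range ≤ isotypicComponent R M T :=
    f.range.le_isotypicComponent.trans (e.symm.isotypicComponent_eq.trans h).le
  exact (isIsotypicOfType_submodule_iff.1 (.isotypicComponent R M T) _ hle).map e.trans

section Constituents

variable {k V W C : Type u} [Field k] [AddCommGroup V] [Module k V] [AddCommGroup W] [Module k W]
  [AddCommGroup C] [Module k C] [Coalgebra k C] {ρ : V →ₗ[k] V ⊗[k] C} {σ : W →ₗ[k] W ⊗[k] C}
  {X Y : SimpleComodule k C}

instance : Nontrivial X.V :=
  (Submodule.nontrivial_iff k).1 ⟨⊤, ⊥, X.isSimple.2.1⟩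

lemma IsConstituent.trans (hσ : IsComod k C σ) (h : IsConstituent k C ρ X.ρ)
    (h' : IsConstituent k C X.ρ σ) : IsConstituent k C ρ σ := by
  obtain ⟨f, hf₀, hf⟩ := h
  obtain ⟨g, hg₀, hg⟩ := h'
  have g_inj := hg.injective X.isComod hσ X.isSimple hg₀
  refine ⟨g ∘ₗ f, fun h ↦ hf₀ ?_, hg.comp hf⟩
  exact (LinearMap.cancel_left g_inj).1 (h.trans (LinearMap.comp_zero g).symm)

lemma comodIsoRel_equivalence : Equivalence (comodIsoRel k C) where
  refl X := ⟨.refl k X.V, isComodHom_iff_act.2 fun _ _ ↦ rfl⟩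
  symm := fun ⟨e, he⟩ ↦ ⟨e.symm, he.symm⟩
  trans := fun ⟨e, he⟩ ⟨e', he'⟩ ↦ ⟨e.trans e', he'.comp he⟩

lemma SimpleComodule.cls_eq_cls_iff : X.cls = Y.cls ↔ IsConstituent k C X.ρ Y.ρ := by
  refine ⟨fun h ↦ ?_, fun ⟨f, hf₀, hf⟩ ↦ Quot.sound ⟨.ofBijective f
    (hf.bijective X.isComod Y.isComod X.isSimple Y.isSimple hf₀), hf⟩⟩
  obtain ⟨e, he⟩ := comodIsoRel_equivalence.eqvGen_iff.1 (Quot.eqvGen_exact h)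
  have e_inj : Function.Injective e.toLinearMap := e.injective
  exact ⟨e, fun h ↦ not_subsingleton X.V ⟨fun v w ↦ e_inj (by rw [h]; rfl)⟩, he⟩

variable (ρ) in
/-- The isomorphism classes of the simple constituents of a comodule, so that `constHat k π U` is
`constituents` of the corestriction of `U` along `π`. -/
def constituents : Set (SimpleComodQuot k C) :=
  {x | ∃ X : SimpleComodule k C, X.cls = x ∧ IsConstituent k C X.ρ ρ}

lemma cls_mem_constituents (hρ : IsComod k C ρ) :
    X.cls ∈ constituents ρ ↔ IsConstituent k C X.ρ ρ :=
  ⟨fun ⟨_, hY, h⟩ ↦ .trans hρ (SimpleComodule.cls_eq_cls_iff.1 hY.symm) h, fun h ↦ ⟨X, rfl, h⟩⟩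

lemma constituents_nonempty [Nontrivial V] (hC : IsCosemisimple k C) (hρ : IsComod k C ρ) :
    (constituents ρ).Nonempty := by
  obtain ⟨X, i, hi, hi₀⟩ := hC.exists_comp_ne_zero hρ
    (f := LinearMap.id) (one_ne_zero (α := Module.End k V))
  exact ⟨X.cls, X, rfl, i, hi₀, hi⟩

lemma constituents_finite [FiniteDimensional k V] (hρ : IsComod k C ρ) :
    (constituents ρ).Finite := by
  have (X : SimpleComodule k C) := X.isSimple.isSimpleModule X.isComod
  have : IsNoetherian (WithConv (C →ₗ[k] k)) (DualModule hρ) :=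
    have : FiniteDimensional k (DualModule hρ) := ‹FiniteDimensional k V›
    isNoetherian_of_tower k inferInstance
  let component (x : SimpleComodQuot k C) :=
    isotypicComponent (WithConv (C →ₗ[k] k)) (DualModule hρ) (DualModule x.out.isComod)
  have embed {x} (hx : x ∈ constituents ρ) :
      ∃ f : DualModule x.out.isComod →ₗ[WithConv (C →ₗ[k] k)] DualModule hρ,
        Function.Injective f := by
    obtain ⟨f, hf₀, hf⟩ := (cls_mem_constituents hρ (X := x.out)).1
      (by rwa [show x.out.cls = x from Quot.out_eq x])
    exact ⟨hf.toDualModule _ _, hf.injective x.out.isComod hρ x.out.isSimple hf₀⟩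
  refine Set.Finite.of_finite_image (f := component)
    ((Set.toFinite (isotypicComponents _ _)).subset ?_) fun x hx y _ hxy ↦ ?_
  · rintro _ ⟨x, hx, rfl⟩
    exact isotypicComponent_mem_isotypicComponents (embed hx).choose_spec
  · obtain ⟨f, hf⟩ := embed hx
    obtain ⟨e⟩ := nonempty_linearEquiv_of_isotypicComponent_eq hf hxy
    rw [← Quot.out_eq x, ← Quot.out_eq y]
    exact Quot.sound ⟨e.restrictScalars k, isComodHom_restrictScalars e.toLinearMap⟩

end Constituents

section ConvAct

variable {k V W C : Type u} {R R' : Type*} [Field k] [AddCommGroup V] [Module k V]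
  [AddCommGroup W] [Module k W] [Ring R] [Algebra k R] [Ring R'] [Algebra k R']

/-- Right multiplication on the second factor, `(w ⊗ r) ⊗ s ↦ w ⊗ rs`. -/
noncomputable def rightMul : (W ⊗[k] R) ⊗[k] R →ₗ[k] W ⊗[k] R :=
  (mul' k R).lTensor W ∘ₗ (TensorProduct.assoc k W R R).toLinearMap

lemma rightMul_tmul (t : W ⊗[k] R) (s : R) :
    rightMul (t ⊗ₜ[k] s) = (mulRight k s).lTensor W t := by
  have h : rightMul ∘ₗ (TensorProduct.mk k (W ⊗[k] R) R).flip s = (mulRight k s).lTensor W :=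
    TensorProduct.ext' fun w r ↦ by simp [rightMul]
  exact LinearMap.congr_fun h t

lemma rightMul_comp_rTensor_rightMul :
    rightMul (k := k) (W := W) ∘ₗ rightMul.rTensor R =
      rightMul ∘ₗ (mul' k R).lTensor (W ⊗[k] R) ∘ₗ
        (TensorProduct.assoc k (W ⊗[k] R) R R).toLinearMap := by
  ext w r s t
  simp [rightMul_tmul, mul_assoc]

lemma lTensor_comp_rightMul (θ : R →ₐ[k] R') :
    θ.toLinearMap.lTensor W ∘ₗ rightMul =
      rightMul ∘ₗ TensorProduct.map (θ.toLinearMap.lTensor W) θ.toLinearMap := by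
  ext w r s
  simp [rightMul_tmul]

variable [AddCommGroup C] [Module k C] {ρ : V →ₗ[k] V ⊗[k] C} {σ : W →ₗ[k] W ⊗[k] C}

/-- The right action `v ↦ g(v₀) h(v₁)` of a map `h : C → R` on a map `g : V → W ⊗ R`, where `R`
multiplies the second factor. For `W = k` and `V = C` it is the convolution product. -/
noncomputable def convAct (ρ : V →ₗ[k] V ⊗[k] C) (g : V →ₗ[k] W ⊗[k] R) (h : C →ₗ[k] R) :
    V →ₗ[k] W ⊗[k] R :=
  rightMul ∘ₗ TensorProduct.map g h ∘ₗ ρ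

lemma lTensor_comp_convAct (θ : R →ₐ[k] R') (ρ : V →ₗ[k] V ⊗[k] C) (g : V →ₗ[k] W ⊗[k] R)
    (h : C →ₗ[k] R) : θ.toLinearMap.lTensor W ∘ₗ convAct ρ g h =
      convAct ρ (θ.toLinearMap.lTensor W ∘ₗ g) (θ.toLinearMap ∘ₗ h) := by
  rw [convAct, convAct, TensorProduct.map_comp, ← comp_assoc, lTensor_comp_rightMul]
  rfl

lemma convAct_cores {D : Type u} [AddCommGroup D] [Module k D] (π : C →ₗ[k] D)
    (ρ : V →ₗ[k] V ⊗[k] C) (g : V →ₗ[k] W ⊗[k] R) (h : D →ₗ[k] R) :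
    convAct (cores k C π ρ) g h = convAct ρ g (h ∘ₗ π) := by
  rw [convAct, cores, ← comp_assoc _ (π.lTensor V), map_comp_lTensor, convAct]

lemma IsComodHom.convAct_comp {X : Type u} [AddCommGroup X] [Module k X] {f : V →ₗ[k] W}
    (hf : IsComodHom k C ρ σ f) (g : W →ₗ[k] X ⊗[k] R) (h : C →ₗ[k] R) :
    convAct σ g h ∘ₗ f = convAct ρ (g ∘ₗ f) h := by
  rw [convAct, comp_assoc, comp_assoc, hf, ← comp_assoc _ (f.rTensor C), map_comp_rTensor, convAct]

lemma lTensor_comp_eq_convAct (ρ : V →ₗ[k] V ⊗[k] C) (h : C →ₗ[k] R) :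
    h.lTensor V ∘ₗ ρ = convAct ρ ((TensorProduct.mk k V R).flip 1) h := by
  have : rightMul ∘ₗ TensorProduct.map ((TensorProduct.mk k V R).flip 1) h = h.lTensor V :=
    TensorProduct.ext' fun v c ↦ by simp [rightMul_tmul]
  rw [convAct, ← comp_assoc, this]

variable [Coalgebra k C]

lemma convAct_convAct (hρ : IsComod k C ρ) (g : V →ₗ[k] W ⊗[k] R) (h h' : C →ₗ[k] R) :
    convAct ρ (convAct ρ g h) h' = convAct ρ g (toConv h * toConv h').ofConv := by
  have coassoc : ρ.rTensor C ∘ₗ ρ = (TensorProduct.assoc k V C C).symm.toLinearMap ∘ₗ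
      comul.lTensor V ∘ₗ ρ := LinearMap.ext hρ.coassoc
  have assoc_map : (TensorProduct.assoc k (W ⊗[k] R) R R).toLinearMap ∘ₗ
      TensorProduct.map (TensorProduct.map g h) h' ∘ₗ
        (TensorProduct.assoc k V C C).symm.toLinearMap =
      TensorProduct.map g (TensorProduct.map h h') :=
    TensorProduct.ext_threefold' fun v c d ↦ by simp
  have map_convAct : TensorProduct.map (convAct ρ g h) h' =
      rightMul.rTensor R ∘ₗ TensorProduct.map (TensorProduct.map g h) h' ∘ₗ ρ.rTensor C :=
    TensorProduct.ext' fun _ _ ↦ rfl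
  have map_mul : TensorProduct.map g (toConv h * toConv h').ofConv =
      (mul' k R).lTensor (W ⊗[k] R) ∘ₗ TensorProduct.map g (TensorProduct.map h h') ∘ₗ
        comul.lTensor V := TensorProduct.ext' fun _ _ ↦ rfl
  calc convAct ρ (convAct ρ g h) h'
      = (rightMul ∘ₗ rightMul.rTensor R) ∘ₗ TensorProduct.map (TensorProduct.map g h) h' ∘ₗ
          ρ.rTensor C ∘ₗ ρ := by
        rw [convAct, map_convAct]
        rfl
    _ = rightMul ∘ₗ (mul' k R).lTensor (W ⊗[k] R) ∘ₗ
          TensorProduct.map g (TensorProduct.map h h') ∘ₗ comul.lTensor V ∘ₗ ρ := by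
        rw [rightMul_comp_rTensor_rightMul, coassoc, ← assoc_map]
        rfl
    _ = convAct ρ g (toConv h * toConv h').ofConv := by
        rw [convAct, map_mul]
        rfl

lemma convAct_one (hρ : IsComod k C ρ) (g : V →ₗ[k] W ⊗[k] R) :
    convAct ρ g (1 : WithConv (C →ₗ[k] R)).ofConv = g := by
  have h : rightMul ∘ₗ TensorProduct.map g (1 : WithConv (C →ₗ[k] R)).ofConv =
      g ∘ₗ slice counit := TensorProduct.ext' fun v c ↦ by
    have mulRight_counit : mulRight k (algebraMap k R (counit c)) = counit (R := k) c • .id :=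
      LinearMap.ext fun r ↦ by simp [Algebra.smul_def, Algebra.commutes]
    simp [rightMul_tmul, mulRight_counit, LinearMap.convOne_def, lTensor_smul]
  calc convAct ρ g (1 : WithConv (C →ₗ[k] R)).ofConv = g ∘ₗ slice counit ∘ₗ ρ := by
        rw [convAct, ← comp_assoc, h, comp_assoc]
    _ = g ∘ₗ .id := congrArg (g ∘ₗ ·) (LinearMap.ext hρ.counit)

end ConvAct

section Antipode

variable {k H R : Type*} [CommRing k] [Ring H] [HopfAlgebra k H] [Ring R] [Algebra k R]

lemma algHom_comp_antipode_mul (θ : H →ₐ[k] R) :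
    toConv (θ.toLinearMap ∘ₗ HopfAlgebra.antipode k) * toConv θ.toLinearMap = 1 := by
  have h := algHom_comp_convMul_distrib θ (toConv (HopfAlgebra.antipode k (A := H))) (toConv .id)
  rw [antipode_mul_id] at h
  refine (congrArg toConv h).symm.trans ?_
  ext x
  simp

lemma algHom_mul_comp_antipode (θ : H →ₐ[k] R) :
    toConv θ.toLinearMap * toConv (θ.toLinearMap ∘ₗ HopfAlgebra.antipode k) = 1 := by
  have h := algHom_comp_convMul_distrib θ (toConv .id) (toConv (HopfAlgebra.antipode k (A := H)))
  rw [id_mul_antipode] at h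
  refine (congrArg toConv h).symm.trans ?_
  ext x
  simp

end Antipode

lemma ker_lTensor_le_ker_lTensor {k M N N' : Type*} (W : Type*) [CommRing k] [AddCommGroup M]
    [Module k M] [AddCommGroup N] [Module k N] [AddCommGroup N'] [Module k N'] [AddCommGroup W]
    [Module k W] [Module.Flat k W] {g : M →ₗ[k] N} {g' : M →ₗ[k] N'}
    (h : LinearMap.ker g ≤ LinearMap.ker g') :
    LinearMap.ker (g.lTensor W) ≤ LinearMap.ker (g'.lTensor W) := by
  intro t ht
  obtain ⟨s, rfl⟩ := (Module.Flat.lTensor_exact W (exact_subtype_ker_map g) t).1 ht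
  have hcomp : g' ∘ₗ (LinearMap.ker g).subtype = 0 := LinearMap.ext fun x ↦ h x.2
  rw [LinearMap.mem_ker, ← lTensor_comp_apply, hcomp, lTensor_zero, LinearMap.zero_apply]

open Algebra.TensorProduct (includeLeft includeRight)

section CoactFst

variable {k W : Type u} {M N R S : Type*} [Field k] [AddCommGroup W] [Module k W] [AddCommGroup M]
  [Module k M] [AddCommGroup N] [Module k N] [Ring R] [Algebra k R] [Ring S] [Algebra k S]

/-- The coaction `c` on the first factor, `w ⊗ x ↦ w₀ ⊗ (w₁ ⊗ x)`. -/
noncomputable def coactFst (c : W →ₗ[k] W ⊗[k] N) : W ⊗[k] M →ₗ[k] W ⊗[k] (N ⊗[k] M) :=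
  (TensorProduct.assoc k W N M).toLinearMap ∘ₗ c.rTensor M

lemma coactFst_tmul (c : W →ₗ[k] W ⊗[k] N) (w : W) (x : M) :
    coactFst c (w ⊗ₜ[k] x) = ((TensorProduct.mk k N M).flip x).lTensor W (c w) := by
  have h : (TensorProduct.assoc k W N M).toLinearMap ∘ₗ (TensorProduct.mk k (W ⊗[k] N) M).flip x =
      ((TensorProduct.mk k N M).flip x).lTensor W := TensorProduct.ext' fun _ _ ↦ rfl
  exact LinearMap.congr_fun h (c w)

lemma coactFst_comp_convAct {V C : Type u} [AddCommGroup V] [Module k V] [AddCommGroup C]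
    [Module k C] (c : W →ₗ[k] W ⊗[k] S) (ρ : V →ₗ[k] V ⊗[k] C) (g : V →ₗ[k] W ⊗[k] R)
    (h : C →ₗ[k] R) :
    coactFst c ∘ₗ convAct ρ g h =
      convAct ρ (coactFst c ∘ₗ g) ((includeRight : R →ₐ[k] S ⊗[k] R).toLinearMap ∘ₗ h) := by
  have hmul : coactFst c ∘ₗ rightMul = rightMul ∘ₗ
      TensorProduct.map (coactFst c) (includeRight : R →ₐ[k] S ⊗[k] R).toLinearMap := by
    ext w x y
    have hmk : mulRight k ((1 : S) ⊗ₜ[k] y) ∘ₗ (TensorProduct.mk k S R).flip x =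
        (TensorProduct.mk k S R).flip (x * y) := LinearMap.ext fun b ↦ by simp
    simp [rightMul_tmul, coactFst_tmul, ← lTensor_comp_apply, hmk]
  rw [convAct, convAct, TensorProduct.map_comp, ← comp_assoc, hmul]
  rfl

end CoactFst

section Coactions

variable {k W H B : Type u} [Field k] [AddCommGroup W] [Module k W] [Ring H] [Bialgebra k H]
  [Ring B] [Bialgebra k B] {π : H →ₐc[k] B} {σ : W →ₗ[k] W ⊗[k] H}

variable (π) in
/-- The right coaction `(id ⊗ π)Δ` of `B` on `H`. -/
noncomputable def coactRight : H →ₐ[k] H ⊗[k] B :=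
  (Algebra.TensorProduct.map (.id k H) (π : H →ₐ[k] B)).comp (Bialgebra.comulAlgHom k H)

variable (π) in
/-- The left coaction `(π ⊗ id)Δ` of `B` on `H`. -/
noncomputable def coactLeft : H →ₐ[k] B ⊗[k] H :=
  (Algebra.TensorProduct.map (π : H →ₐ[k] B) (.id k H)).comp (Bialgebra.comulAlgHom k H)

lemma toConv_coactRight : toConv (coactRight π).toLinearMap =
    toConv (includeLeft : H →ₐ[k] H ⊗[k] B).toLinearMap *
      toConv ((includeRight : B →ₐ[k] H ⊗[k] B).toLinearMap ∘ₗ (π : H →ₗ[k] B)) := by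
  have h : (π : H →ₗ[k] B).lTensor H = mul' k (H ⊗[k] B) ∘ₗ TensorProduct.map
      (includeLeft : H →ₐ[k] H ⊗[k] B).toLinearMap
      ((includeRight : B →ₐ[k] H ⊗[k] B).toLinearMap ∘ₗ (π : H →ₗ[k] B)) :=
    TensorProduct.ext' fun x y ↦ by simp
  exact congrArg (fun m ↦ toConv (m ∘ₗ comul)) h

lemma toConv_coactLeft : toConv (coactLeft π).toLinearMap =
    toConv ((includeLeft : B →ₐ[k] B ⊗[k] H).toLinearMap ∘ₗ (π : H →ₗ[k] B)) *
      toConv (includeRight : H →ₐ[k] B ⊗[k] H).toLinearMap := by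
  have h : (π : H →ₗ[k] B).rTensor H = mul' k (B ⊗[k] H) ∘ₗ TensorProduct.map
      ((includeLeft : B →ₐ[k] B ⊗[k] H).toLinearMap ∘ₗ (π : H →ₗ[k] B))
      (includeRight : H →ₐ[k] B ⊗[k] H).toLinearMap :=
    TensorProduct.ext' fun x y ↦ by simp
  exact congrArg (fun m ↦ toConv (m ∘ₗ comul)) h

lemma lTensor_coactLeft_eq_of_le
    (hco : quotientSpaceLeft k H (π : H →ₗ[k] B) ≤ quotientSpaceRight k H (π : H →ₗ[k] B))
    {t : W ⊗[k] H} (ht : (coactRight π).toLinearMap.lTensor W t =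
      (includeLeft : H →ₐ[k] H ⊗[k] B).toLinearMap.lTensor W t) :
    (coactLeft π).toLinearMap.lTensor W t =
      (includeRight : H →ₐ[k] B ⊗[k] H).toLinearMap.lTensor W t := by
  have h : t ∈ LinearMap.ker (((coactRight π).toLinearMap -
      (includeLeft : H →ₐ[k] H ⊗[k] B).toLinearMap).lTensor W) := by
    rw [LinearMap.mem_ker, lTensor_sub, LinearMap.sub_apply, ht, sub_self]
  have h' : t ∈ LinearMap.ker (((coactLeft π).toLinearMap -
      (includeRight : H →ₐ[k] B ⊗[k] H).toLinearMap).lTensor W) :=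
    ker_lTensor_le_ker_lTensor W hco h
  rwa [LinearMap.mem_ker, lTensor_sub, LinearMap.sub_apply, sub_eq_zero] at h'

lemma lTensor_coactRight_comp (hσ : IsComod k H σ) :
    (coactRight π).toLinearMap.lTensor W ∘ₗ σ =
      convAct σ ((includeLeft : H →ₐ[k] H ⊗[k] B).toLinearMap.lTensor W ∘ₗ σ)
        ((includeRight : B →ₐ[k] H ⊗[k] B).toLinearMap ∘ₗ (π : H →ₗ[k] B)) := by
  rw [lTensor_comp_eq_convAct, lTensor_comp_eq_convAct, convAct_convAct hσ, ← toConv_coactRight]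

lemma coactFst_comp (hσ : IsComod k H σ) :
    coactFst (cores k H (π : H →ₗ[k] B) σ) ∘ₗ σ = (coactLeft π).toLinearMap.lTensor W ∘ₗ σ := by
  have coassoc : σ.rTensor H ∘ₗ σ = (TensorProduct.assoc k W H H).symm.toLinearMap ∘ₗ
      comul.lTensor W ∘ₗ σ := LinearMap.ext hσ.coassoc
  have assoc_map : (TensorProduct.assoc k W B H).toLinearMap ∘ₗ
      ((π : H →ₗ[k] B).lTensor W).rTensor H ∘ₗ (TensorProduct.assoc k W H H).symm.toLinearMap =
      ((π : H →ₗ[k] B).rTensor H).lTensor W := TensorProduct.ext_threefold' fun _ _ _ ↦ rfl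
  calc coactFst (cores k H (π : H →ₗ[k] B) σ) ∘ₗ σ
      = (TensorProduct.assoc k W B H).toLinearMap ∘ₗ ((π : H →ₗ[k] B).lTensor W).rTensor H ∘ₗ
          σ.rTensor H ∘ₗ σ := by
        rw [coactFst, cores, rTensor_comp]
        rfl
    _ = ((π : H →ₗ[k] B).rTensor H).lTensor W ∘ₗ comul.lTensor W ∘ₗ σ := by
        rw [coassoc, ← assoc_map]
        rfl
    _ = (coactLeft π).toLinearMap.lTensor W ∘ₗ σ := by
        rw [← comp_assoc, ← lTensor_comp]
        rfl

end Coactions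

section AntipodeTwist

variable {k V W H B : Type u} [Field k] [AddCommGroup V] [Module k V] [AddCommGroup W] [Module k W]
  [Ring H] [HopfAlgebra k H] [Ring B] [Bialgebra k B] {π : H →ₐc[k] B}
  {ρ : V →ₗ[k] V ⊗[k] H} {σ : W →ₗ[k] W ⊗[k] H} {f : V →ₗ[k] W}

/-- The map `v ↦ f(v₀)₀ ⊗ f(v₀)₁ S(v₁)`, which measures the failure of `f` to be colinear. -/
noncomputable def antipodeTwist (ρ : V →ₗ[k] V ⊗[k] H) (σ : W →ₗ[k] W ⊗[k] H) (f : V →ₗ[k] W) :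
    V →ₗ[k] W ⊗[k] H :=
  convAct ρ (σ ∘ₗ f) (HopfAlgebra.antipode k)

lemma convAct_antipodeTwist (hρ : IsComod k H ρ) (σ : W →ₗ[k] W ⊗[k] H) (f : V →ₗ[k] W) :
    convAct ρ (antipodeTwist ρ σ f) .id = σ ∘ₗ f := by
  rw [antipodeTwist, convAct_convAct hρ, antipode_mul_id, convAct_one hρ]

lemma lTensor_coactRight_comp_antipodeTwist (hρ : IsComod k H ρ) (hσ : IsComod k H σ)
    (hf : IsComodHom k B (cores k H (π : H →ₗ[k] B) ρ) (cores k H (π : H →ₗ[k] B) σ) f) :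
    (coactRight π).toLinearMap.lTensor W ∘ₗ antipodeTwist ρ σ f =
      (includeLeft : H →ₐ[k] H ⊗[k] B).toLinearMap.lTensor W ∘ₗ antipodeTwist ρ σ f := by
  have hcomp : (coactRight π).toLinearMap.lTensor W ∘ₗ σ ∘ₗ f =
      convAct ρ ((includeLeft : H →ₐ[k] H ⊗[k] B).toLinearMap.lTensor W ∘ₗ σ ∘ₗ f)
        ((includeRight : B →ₐ[k] H ⊗[k] B).toLinearMap ∘ₗ (π : H →ₗ[k] B)) := by
    rw [← comp_assoc, lTensor_coactRight_comp hσ, ← convAct_cores, hf.convAct_comp, convAct_cores,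
      comp_assoc]
  have hconv : toConv ((includeRight : B →ₐ[k] H ⊗[k] B).toLinearMap ∘ₗ (π : H →ₗ[k] B)) =
      toConv ((includeLeft : H →ₐ[k] H ⊗[k] B).toLinearMap ∘ₗ HopfAlgebra.antipode k) *
        toConv (coactRight π).toLinearMap := by
    rw [toConv_coactRight, ← mul_assoc, algHom_comp_antipode_mul, one_mul]
  rw [antipodeTwist, lTensor_comp_convAct, lTensor_comp_convAct, hcomp, convAct_convAct hρ, hconv,
    mul_assoc, algHom_mul_comp_antipode, mul_one]

lemma coactFst_comp_antipodeTwist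
    (hco : quotientSpaceLeft k H (π : H →ₗ[k] B) ≤ quotientSpaceRight k H (π : H →ₗ[k] B))
    (hρ : IsComod k H ρ) (hσ : IsComod k H σ)
    (hf : IsComodHom k B (cores k H (π : H →ₗ[k] B) ρ) (cores k H (π : H →ₗ[k] B) σ) f) :
    coactFst (cores k H (π : H →ₗ[k] B) σ) ∘ₗ antipodeTwist ρ σ f =
      convAct ρ ((includeRight : H →ₐ[k] B ⊗[k] H).toLinearMap.lTensor W ∘ₗ antipodeTwist ρ σ f)
        ((includeLeft : B →ₐ[k] B ⊗[k] H).toLinearMap ∘ₗ (π : H →ₗ[k] B)) := by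
  have coinvariant : (coactLeft π).toLinearMap.lTensor W ∘ₗ antipodeTwist ρ σ f =
      (includeRight : H →ₐ[k] B ⊗[k] H).toLinearMap.lTensor W ∘ₗ antipodeTwist ρ σ f :=
    LinearMap.ext fun v ↦ lTensor_coactLeft_eq_of_le hco
      (LinearMap.congr_fun (lTensor_coactRight_comp_antipodeTwist hρ hσ hf) v)
  have hcomp : (coactLeft π).toLinearMap.lTensor W ∘ₗ σ ∘ₗ f =
      convAct ρ ((includeRight : H →ₐ[k] B ⊗[k] H).toLinearMap.lTensor W ∘ₗ antipodeTwist ρ σ f)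
        (coactLeft π).toLinearMap := by
    rw [← convAct_antipodeTwist hρ σ f, lTensor_comp_convAct, coinvariant, LinearMap.comp_id]
  rw [antipodeTwist, coactFst_comp_convAct, ← comp_assoc, coactFst_comp hσ, comp_assoc, hcomp,
    convAct_convAct hρ, toConv_coactLeft, mul_assoc, algHom_mul_comp_antipode, mul_one,
    antipodeTwist]

lemma isComodHom_slice_comp_antipodeTwist
    (hco : quotientSpaceLeft k H (π : H →ₗ[k] B) ≤ quotientSpaceRight k H (π : H →ₗ[k] B))
    (hρ : IsComod k H ρ) (hσ : IsComod k H σ)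
    (hf : IsComodHom k B (cores k H (π : H →ₗ[k] B) ρ) (cores k H (π : H →ₗ[k] B) σ) f)
    (φ : H →ₗ[k] k) :
    IsComodHom k B (cores k H (π : H →ₗ[k] B) ρ) (cores k H (π : H →ₗ[k] B) σ)
      (slice φ ∘ₗ antipodeTwist ρ σ f) := by
  have slice_coactFst (c : W →ₗ[k] W ⊗[k] B) :
      (slice φ).lTensor W ∘ₗ coactFst c = c ∘ₗ slice φ := by
    ext w x
    have hmk : slice φ ∘ₗ (TensorProduct.mk k B H).flip x = φ x • .id :=
      LinearMap.ext fun b ↦ by simp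
    simp [coactFst_tmul, ← lTensor_comp_apply, hmk, lTensor_smul]
  have slice_rightMul : (slice φ).lTensor W ∘ₗ rightMul ∘ₗ TensorProduct.map
      ((includeRight : H →ₐ[k] B ⊗[k] H).toLinearMap.lTensor W)
      (includeLeft : B →ₐ[k] B ⊗[k] H).toLinearMap = (slice φ).rTensor B := by
    ext w x b
    simp [rightMul_tmul, TensorProduct.smul_tmul]
  calc cores k H (π : H →ₗ[k] B) σ ∘ₗ slice φ ∘ₗ antipodeTwist ρ σ f
      = (slice φ).lTensor W ∘ₗ coactFst (cores k H (π : H →ₗ[k] B) σ) ∘ₗ antipodeTwist ρ σ f := by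
        rw [← comp_assoc, ← slice_coactFst, comp_assoc]
    _ = (slice φ).rTensor B ∘ₗ TensorProduct.map (antipodeTwist ρ σ f) (π : H →ₗ[k] B) ∘ₗ ρ := by
        rw [coactFst_comp_antipodeTwist hco hρ hσ hf, convAct, TensorProduct.map_comp,
          ← slice_rightMul]
        rfl
    _ = (slice φ ∘ₗ antipodeTwist ρ σ f).rTensor B ∘ₗ cores k H (π : H →ₗ[k] B) ρ := by
        rw [cores, rTensor_comp, ← rTensor_comp_lTensor]
        rfl

end AntipodeTwist

section Trace

variable {k V W C H B : Type u} [Field k] [AddCommGroup V] [Module k V] [AddCommGroup W]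
  [Module k W] [AddCommGroup C] [Module k C] [Ring H] [HopfAlgebra k H] [Ring B] [Bialgebra k B]

/-- The trace of a comodule `V` in a comodule `W`: the sum of the images of all comodule maps
`V → W`. -/
def comodTrace (ρ : V →ₗ[k] V ⊗[k] C) (σ : W →ₗ[k] W ⊗[k] C) : Submodule k W :=
  ⨆ (f : V →ₗ[k] W) (_ : IsComodHom k C ρ σ f), LinearMap.range f

lemma apply_mem_comodTrace {ρ : V →ₗ[k] V ⊗[k] C} {σ : W →ₗ[k] W ⊗[k] C} {f : V →ₗ[k] W}
    (hf : IsComodHom k C ρ σ f) (v : V) : f v ∈ comodTrace ρ σ :=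
  (le_iSup₂ (f := fun (f : V →ₗ[k] W) (_ : IsComodHom k C ρ σ f) ↦ LinearMap.range f) f hf)
    ⟨v, rfl⟩

lemma isSubcomod_comodTrace {π : H →ₐc[k] B} {ρ : V →ₗ[k] V ⊗[k] H} {σ : W →ₗ[k] W ⊗[k] H}
    (hco : quotientSpaceLeft k H (π : H →ₗ[k] B) ≤ quotientSpaceRight k H (π : H →ₗ[k] B))
    (hρ : IsComod k H ρ) (hσ : IsComod k H σ) :
    IsSubcomod k H σ (comodTrace (cores k H (π : H →ₗ[k] B) ρ) (cores k H (π : H →ₗ[k] B) σ)) := by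
  set T := comodTrace (cores k H (π : H →ₗ[k] B) ρ) (cores k H (π : H →ₗ[k] B) σ)
  suffices h : ∀ φ : H →ₗ[k] k, T ≤ T.comap (act σ φ) from
    isSubcomod_iff_act.2 fun u hu φ ↦ h φ hu
  refine fun φ ↦ iSup₂_le fun f hf ↦ ?_
  rintro _ ⟨v, rfl⟩
  have mem_trace (t : V ⊗[k] H) :
      slice φ (rightMul (TensorProduct.map (antipodeTwist ρ σ f) .id t)) ∈ T := by
    induction t with
    | zero => simp only [map_zero, zero_mem]
    | add s t hs ht => simpa only [map_add] using add_mem hs ht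
    | tmul x c =>
      rw [TensorProduct.map_tmul, rightMul_tmul, slice_lTensor]
      exact apply_mem_comodTrace (isComodHom_slice_comp_antipodeTwist hco hρ hσ hf _) x
  have act_eq : act σ φ (f v) =
      slice φ (rightMul (TensorProduct.map (antipodeTwist ρ σ f) .id (ρ v))) :=
    congrArg (slice φ) (LinearMap.congr_fun (convAct_antipodeTwist hρ σ f) v).symm
  exact Submodule.mem_comap.2 (by rw [act_eq]; exact mem_trace (ρ v))

end Trace

section Regular

variable {k V C : Type u} [Field k] [AddCommGroup V] [Module k V] [AddCommGroup C] [Module k C]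
  {ρ : V →ₗ[k] V ⊗[k] C}

/-- The matrix coefficients `v ↦ φ(v₀) v₁` of a comodule along a functional `φ`. -/
noncomputable def coeff (ρ : V →ₗ[k] V ⊗[k] C) (φ : V →ₗ[k] k) : V →ₗ[k] C :=
  (TensorProduct.lid k C).toLinearMap ∘ₗ φ.rTensor C ∘ₗ ρ

lemma dual_apply_coeff (ρ : V →ₗ[k] V ⊗[k] C) (φ : V →ₗ[k] k) (θ : C →ₗ[k] k) (v : V) :
    θ (coeff ρ φ v) = φ (act ρ θ v) := by
  have h : θ ∘ₗ (TensorProduct.lid k C).toLinearMap ∘ₗ φ.rTensor C = φ ∘ₗ slice θ :=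
    TensorProduct.ext' fun v c ↦ by simp [mul_comm]
  exact LinearMap.congr_fun h (ρ v)

variable [Coalgebra k C]

lemma isComod_comul : IsComod k C (comul (R := k) (A := C)) where
  coassoc c := (LinearEquiv.eq_symm_apply _).2 (coassoc_apply c)
  counit c := by rw [lTensor_counit_comul, TensorProduct.rid_tmul, one_smul]

lemma dual_apply_act_comul (θ ψ : C →ₗ[k] k) (c : C) :
    θ (act comul ψ c) = (toConv θ * toConv ψ).ofConv c := by
  have h : θ ∘ₗ slice ψ = mul' k k ∘ₗ TensorProduct.map θ ψ :=
    TensorProduct.ext' fun x y ↦ by simp [mul_comm]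
  exact LinearMap.congr_fun h (comul c)

lemma isComodHom_coeff (hρ : IsComod k C ρ) (φ : V →ₗ[k] k) :
    IsComodHom k C ρ comul (coeff ρ φ) :=
  isComodHom_iff_act.2 fun ψ v ↦ sub_eq_zero.1 <|
    (Module.forall_dual_apply_eq_zero_iff k _).1 fun θ ↦ by
      rw [map_sub, sub_eq_zero, dual_apply_act_comul, dual_apply_coeff, dual_apply_coeff,
        (isComod_iff_act.1 hρ).1]

lemma isConstituent_comul [Nontrivial V] (hρ : IsComod k C ρ) : IsConstituent k C ρ comul := by
  obtain ⟨v, hv⟩ := exists_ne (0 : V)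
  obtain ⟨φ, hφ⟩ := Module.Projective.exists_dual_ne_zero k hv
  refine ⟨coeff ρ φ, fun h ↦ hφ ?_, isComodHom_coeff hρ φ⟩
  rw [← (isComod_iff_act.1 hρ).2 v, ← dual_apply_coeff, h, LinearMap.zero_apply, map_zero]

lemma isComodHom_coalgHom {D : Type u} {F : Type*} [AddCommGroup D] [Module k D] [Coalgebra k D]
    [FunLike F C D] [CoalgHomClass F k C D] (π : F) :
    IsComodHom k D (cores k C (π : C →ₗ[k] D) comul) comul (π : C →ₗ[k] D) := by
  rw [IsComodHom, cores, ← comp_assoc, rTensor_comp_lTensor]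
  exact (CoalgHomClass.map_comp_comul π).symm

end Regular

section Coinvariants

variable {k H B : Type u} [Field k] [Ring H] [Bialgebra k H] [Ring B] [Bialgebra k B]
  {π : H →ₐc[k] B}

lemma mem_quotientSpaceLeft {x : H} : x ∈ quotientSpaceLeft k H (π : H →ₗ[k] B) ↔
    (π : H →ₗ[k] B).lTensor H (comul x) = x ⊗ₜ[k] 1 :=
  sub_eq_zero

lemma mem_quotientSpaceRight {x : H} : x ∈ quotientSpaceRight k H (π : H →ₗ[k] B) ↔
    (π : H →ₗ[k] B).rTensor H (comul x) = 1 ⊗ₜ[k] x :=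
  sub_eq_zero

lemma apply_eq_counit_smul_one {x : H} (hx : x ∈ quotientSpaceLeft k H (π : H →ₗ[k] B)) :
    π x = counit (R := k) x • (1 : B) := by
  have rTensor_counit (t : H ⊗[k] H) :
      TensorProduct.lid k B (counit.rTensor B ((π : H →ₗ[k] B).lTensor H t)) =
        π (TensorProduct.lid k H (counit.rTensor H t)) := by
    induction t with
    | zero => simp only [map_zero]
    | add s t hs ht => simp only [map_add, hs, ht]
    | tmul x y => simp
  calc π x = TensorProduct.lid k B (counit.rTensor B ((π : H →ₗ[k] B).lTensor H (comul x))) := by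
        rw [rTensor_counit, rTensor_counit_comul, TensorProduct.lid_tmul, one_smul]
    _ = counit (R := k) x • (1 : B) := by
        rw [mem_quotientSpaceLeft.1 hx, rTensor_tmul, TensorProduct.lid_tmul]

lemma quotientSpaceLeft_le_quotientSpaceRight {A : Type*} [AddCommGroup A] [Module k A]
    [Coalgebra k A] (ι : A →ₗc[k] H) (π : H →ₐc[k] B)
    (hι : LinearMap.range (ι : A →ₗ[k] H) = quotientSpaceLeft k H (π : H →ₗ[k] B)) :
    quotientSpaceLeft k H (π : H →ₗ[k] B) ≤ quotientSpaceRight k H (π : H →ₗ[k] B) := by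
  rw [← hι]
  rintro _ ⟨a, rfl⟩
  have π_comp_ι (b : A) : π (ι b) = counit (R := k) b • (1 : B) := by
    have h : π (ι b) = counit (R := k) (ι b) • (1 : B) :=
      apply_eq_counit_smul_one (hι.le ⟨b, rfl⟩)
    rw [h, CoalgHomClass.counit_comp_apply]
  have rTensor_map (t : A ⊗[k] A) :
      (π : H →ₗ[k] B).rTensor H (TensorProduct.map (ι : A →ₗ[k] H) (ι : A →ₗ[k] H) t) =
        1 ⊗ₜ[k] ι (TensorProduct.lid k A (counit.rTensor A t)) := by
    induction t with
    | zero => simp only [map_zero, TensorProduct.tmul_zero]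
    | add s t hs ht => simp only [map_add, TensorProduct.tmul_add, hs, ht]
    | tmul b c => simp [π_comp_ι, TensorProduct.smul_tmul]
  refine mem_quotientSpaceRight.2 ?_
  calc (π : H →ₗ[k] B).rTensor H (comul (ι a))
      = (π : H →ₗ[k] B).rTensor H
          (TensorProduct.map (ι : A →ₗ[k] H) (ι : A →ₗ[k] H) (comul a)) :=
        congrArg _ (CoalgHomClass.map_comp_comul_apply ι a).symm
    _ = 1 ⊗ₜ[k] ι a := by
        rw [rTensor_map, rTensor_counit_comul, TensorProduct.lid_tmul, one_smul]

end Coinvariants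

section ConstHat

variable {k : Type u} [Field k] {H B : Type u} [Ring H] [HopfAlgebra k H] [Ring B]
  [HopfAlgebra k B] {π : H →ₐc[k] B} {U U' : SimpleComodule k H}

lemma exists_mem_constHat (hcssH : IsCosemisimple k H) (hcssB : IsCosemisimple k B)
    (hsurj : Function.Surjective π) (X : SimpleComodule k B) :
    ∃ U : SimpleComodule k H, X.cls ∈ constHat k π U := by
  obtain ⟨p, hp₀, hp⟩ := (isConstituent_comul X.isComod).symm hcssB X.isComod isComod_comul
  have hpπ : p ∘ₗ (π : H →ₗ[k] B) ≠ 0 := fun h ↦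
    hp₀ ((LinearMap.cancel_right hsurj).1 (h.trans (LinearMap.zero_comp _).symm))
  obtain ⟨U, i, hi, hi₀⟩ := hcssH.exists_comp_ne_zero isComod_comul hpπ
  have hU : IsConstituent k B (cores k H (π : H →ₗ[k] B) U.ρ) X.ρ :=
    ⟨_, hi₀, (hp.comp (isComodHom_coalgHom π)).comp (hi.cores _)⟩
  exact ⟨U, X, rfl, hU.symm hcssB (U.isComod.cores π) X.isComod⟩

lemma constHat_subset_of_isConstituent
    (hco : quotientSpaceLeft k H (π : H →ₗ[k] B) ≤ quotientSpaceRight k H (π : H →ₗ[k] B))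
    (hcssB : IsCosemisimple k B)
    (h : IsConstituent k B (cores k H (π : H →ₗ[k] B) U.ρ) (cores k H (π : H →ₗ[k] B) U'.ρ)) :
    constHat k π U' ⊆ constHat k π U := by
  rintro _ ⟨X, rfl, hX⟩
  obtain ⟨f, hf₀, hf⟩ := h
  obtain ⟨p, hp₀, hp⟩ := hX.symm hcssB X.isComod (U'.isComod.cores π)
  have trace_eq_top :
      comodTrace (cores k H (π : H →ₗ[k] B) U.ρ) (cores k H (π : H →ₗ[k] B) U'.ρ) = ⊤ := by
    refine (U'.isSimple.2.2 _ le_top (isSubcomod_comodTrace hco U.isComod U'.isComod)).resolve_left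
      fun hbot ↦ hf₀ (LinearMap.ext fun v ↦ ?_)
    exact (Submodule.mem_bot k).1 (hbot ▸ apply_mem_comodTrace hf v)
  have hUX : IsConstituent k B (cores k H (π : H →ₗ[k] B) U.ρ) X.ρ := by
    by_contra hUX
    refine hp₀ (LinearMap.ker_eq_top.1 (top_le_iff.1 (trace_eq_top ▸ iSup₂_le fun g hg ↦ ?_)))
    exact LinearMap.range_le_ker_iff.2 (not_not.1 fun hpg ↦ hUX ⟨p ∘ₗ g, hpg, hp.comp hg⟩)
  exact ⟨X, rfl, hUX.symm hcssB (U.isComod.cores π) X.isComod⟩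

lemma constHat_eq_of_isConstituent
    (hco : quotientSpaceLeft k H (π : H →ₗ[k] B) ≤ quotientSpaceRight k H (π : H →ₗ[k] B))
    (hcssB : IsCosemisimple k B)
    (h : IsConstituent k B (cores k H (π : H →ₗ[k] B) U.ρ) (cores k H (π : H →ₗ[k] B) U'.ρ)) :
    constHat k π U = constHat k π U' :=
  (constHat_subset_of_isConstituent hco hcssB
    (h.symm hcssB (U.isComod.cores π) (U'.isComod.cores π))).antisymm
    (constHat_subset_of_isConstituent hco hcssB h)

lemma isConstituent_of_mem_constHat (hcssB : IsCosemisimple k B) {x : SimpleComodQuot k B}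
    (h : x ∈ constHat k π U) (h' : x ∈ constHat k π U') :
    IsConstituent k B (cores k H (π : H →ₗ[k] B) U.ρ) (cores k H (π : H →ₗ[k] B) U'.ρ) := by
  obtain ⟨X, rfl, hX⟩ := h
  exact (hX.symm hcssB X.isComod (U.isComod.cores π)).trans (U'.isComod.cores π)
    ((cls_mem_constituents (U'.isComod.cores π)).1 h')

lemma constHat_nonempty (hcssB : IsCosemisimple k B) (U : SimpleComodule k H) :
    (constHat k π U).Nonempty :=
  constituents_nonempty hcssB (U.isComod.cores π)

lemma constHat_finite (U : SimpleComodule k H) : (constHat k π U).Finite :=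
  have := U.isSimple.finiteDimensional U.isComod
  constituents_finite (U.isComod.cores π)

lemma constHat_eq_setOf_relSimB
    (hco : quotientSpaceLeft k H (π : H →ₗ[k] B) ≤ quotientSpaceRight k H (π : H →ₗ[k] B))
    (hcssB : IsCosemisimple k B) {x : SimpleComodQuot k B} (hx : x ∈ constHat k π U) :
    constHat k π U = {y | relSimB k π x y} := by
  refine Set.Subset.antisymm (fun y hy ↦ ⟨U, hx, hy⟩) ?_
  rintro y ⟨U', hx', hy⟩
  exact constHat_subset_of_isConstituent hco hcssB (isConstituent_of_mem_constHat hcssB hx hx') hy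

lemma constMap_cls (U : SimpleComodule k H) : constMap k π U.cls = constHat k π U := by
  refine Set.Subset.antisymm ?_ fun x hx ↦ ⟨U, rfl, hx⟩
  rintro _ ⟨U', hU', X, rfl, g, hg₀, hg⟩
  obtain ⟨f, hf₀, hf⟩ := SimpleComodule.cls_eq_cls_iff.1 hU'
  have f_inj := hf.injective U'.isComod U.isComod U'.isSimple hf₀
  refine ⟨X, rfl, f ∘ₗ g, fun h ↦ hg₀ ?_, (hf.cores _).comp hg⟩
  exact (LinearMap.cancel_left f_inj).1 (h.trans (LinearMap.comp_zero f).symm)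

lemma constMap_eq_iff_relSimH
    (hco : quotientSpaceLeft k H (π : H →ₗ[k] B) ≤ quotientSpaceRight k H (π : H →ₗ[k] B))
    (hcssB : IsCosemisimple k B) {x x' : SimpleComodQuot k H} :
    constMap k π x = constMap k π x' ↔ relSimH k π x x' := by
  constructor
  · obtain ⟨U, rfl⟩ := Quot.exists_rep x
    obtain ⟨U', rfl⟩ := Quot.exists_rep x'
    intro h
    have constHat_eq : constHat k π U = constHat k π U' :=
      (constMap_cls U).symm.trans (h.trans (constMap_cls U'))
    obtain ⟨y, hy⟩ := constHat_nonempty (π := π) hcssB U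
    exact ⟨U, U', rfl, rfl, isConstituent_of_mem_constHat hcssB hy (constHat_eq ▸ hy)⟩
  · rintro ⟨U, U', rfl, rfl, h⟩
    rw [constMap_cls, constMap_cls, constHat_eq_of_isConstituent hco hcssB h]

end ConstHat

end QG

open QG in
theorem statement_12_general (k : Type u) [Field k] (H B : Type u) [Ring H] [HopfAlgebra k H]
    [Ring B] [HopfAlgebra k B] (π : H →ₐc[k] B) (hsurj : Function.Surjective π)
    (hco : quotientSpaceLeft k H (π : H →ₗ[k] B) ≤ quotientSpaceRight k H (π : H →ₗ[k] B))
    (hcssH : IsCosemisimple k H) (hcssB : IsCosemisimple k B) :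
    (∀ x : SimpleComodQuot k H, (constMap k π x).Finite) ∧
    Set.range (constMap k π) =
      {s : Set (SimpleComodQuot k B) | ∃ z : SimpleComodQuot k B,
        s = {y | relSimB k π z y}} ∧
    (∀ x x' : SimpleComodQuot k H,
      constMap k π x = constMap k π x' ↔ relSimH k π x x') := by
  refine ⟨?_, Set.ext fun s ↦ ⟨?_, ?_⟩, fun _ _ ↦ constMap_eq_iff_relSimH hco hcssB⟩
  · rintro ⟨U⟩
    exact (constMap_cls (π := π) U).symm ▸ constHat_finite U
  · rintro ⟨⟨U⟩, rfl⟩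
    obtain ⟨x, hx⟩ := constHat_nonempty (π := π) hcssB U
    exact ⟨x, (constMap_cls U).trans (constHat_eq_setOf_relSimB hco hcssB hx)⟩
  · rintro ⟨⟨X⟩, rfl⟩
    obtain ⟨U, hU⟩ := exists_mem_constHat hcssH hcssB hsurj X
    exact ⟨U.cls, (constMap_cls U).trans (constHat_eq_setOf_relSimB hco hcssB hU)⟩

open QG in
/-- For an exact sequence `k → A → H → B → k` of cosemisimple
Hopf algebras, the map `Ĥ → {finite subsets of B̂}`, `V ↦ const(V)`, has as
range exactly the equivalence classes of `∼_B`, and its fibers are exactly the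
equivalence classes of `∼_H`. -/
theorem statement_12 (k : Type u) [Field k] [IsAlgClosed k]
    (A H B : Type u) [Ring A] [HopfAlgebra k A] [Ring H] [HopfAlgebra k H]
    [Ring B] [HopfAlgebra k B]
    (ι : A →ₐc[k] H) (π : H →ₐc[k] B)
    (hinj : Function.Injective ι) (hsurj : Function.Surjective π)
    (hexactA : LinearMap.range (ι : A →ₗ[k] H) =
      quotientSpaceLeft k H (π : H →ₗ[k] B))
    (hexactB : LinearMap.ker (π : H →ₗ[k] B) =
      leftIdealGen k (LinearMap.range (ι : A →ₗ[k] H) ⊓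
        LinearMap.ker (Coalgebra.counit (R := k) (A := H))))
    (hcssA : IsCosemisimple k A) (hcssH : IsCosemisimple k H)
    (hcssB : IsCosemisimple k B) :
    (∀ x : SimpleComodQuot k H, (constMap k π x).Finite) ∧
    Set.range (constMap k π) =
      {s : Set (SimpleComodQuot k B) | ∃ z : SimpleComodQuot k B,
        s = {y | relSimB k π z y}} ∧
    (∀ x x' : SimpleComodQuot k H,
      constMap k π x = constMap k π x' ↔ relSimH k π x x') :=
  statement_12_general k H B π hsurj
    (quotientSpaceLeft_le_quotientSpaceRight (ι : A →ₗc[k] H) π hexactA) hcssH hcssB
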